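/- Let X = X_{a,b} be the Bourgain–Delbaen space. Then for every ε > 0 the ε-Szlenk index of the unit ball of X^* is finite: η(ε, B_{X^*}) < ω. -/

import Mathlib

open MeasureTheory Set Ordinal Filter
open scoped Classical

/-- `ℓ∞ = ℓ∞(ℕ)`. -/
noncomputable abbrev linf : Type := lp (fun _ : ℕ => ℝ) ⊤

/-- The `k`-th coordinate functional `e_k^*` on `ℓ∞`. -/
noncomputable def coordFn (k : ℕ) : linf →L[ℝ] ℝ :=
  LinearMap.mkContinuous
    { toFun := fun x => x k
      map_add' := fun _ _ => rfl
      map_smul' := fun _ _ => rfl }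
    1 (fun x => by
      rw [one_mul]
      exact lp.norm_apply_le_norm (E := fun _ : ℕ => ℝ) ENNReal.top_ne_zero x k)

/-- The `k`-th coordinate vector `e_k` of `ℓ∞`. -/
noncomputable def ek (k : ℕ) : linf := lp.single ⊤ k (1 : ℝ)

/-- `E_n = span{e_k : 1 ≤ k ≤ d n}`. -/
noncomputable def Esub (d : ℕ → ℕ) (n : ℕ) : Submodule ℝ linf :=
  Submodule.span ℝ {x : linf | ∃ k : ℕ, 1 ≤ k ∧ k ≤ d n ∧ x = ek k}

/-- All the data of the Bourgain–Delbaen construction: the constants `a`, `b`, `λ`, the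
dimensions `d n`, the enumeration `φ` of tuples `(σ',i,m,σ'',j)`, the coordinate projections
`π_m`, the embeddings `i_{m,n}` and the limit projections `P_m`, together with their defining
properties. -/
structure BDSetup where
  a : ℝ
  b : ℝ
  lam : ℝ
  hb : 0 < b
  hba : b < a
  ha : a < 1
  hlam : 1 < lam
  hineq : a + 2 * b * lam < lam
  /-- the dimensions -/
  d : ℕ → ℕ
  hd1 : d 1 = 1
  hd2 : d 2 = 2
  /-- the enumeration of the tuples `(σ', i, m, σ'', j)` -/
  φ : ℕ → ℤ × ℕ × ℕ × ℤ × ℕ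
  hφ : ∀ n : ℕ, 2 ≤ n → Set.BijOn φ {k : ℕ | d n < k ∧ k ≤ d (n + 1)}
      {q : ℤ × ℕ × ℕ × ℤ × ℕ | (q.1 = 1 ∨ q.1 = -1) ∧ (q.2.2.2.1 = 1 ∨ q.2.2.2.1 = -1) ∧
        1 ≤ q.2.2.1 ∧ q.2.2.1 < n ∧ 1 ≤ q.2.1 ∧ q.2.1 ≤ d q.2.2.1 ∧
        1 ≤ q.2.2.2.2 ∧ q.2.2.2.2 ≤ d n}
  /-- the coordinate projections `π_m` -/
  pi : ℕ → (linf →L[ℝ] linf)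
  hpi : ∀ (m : ℕ) (x : linf) (k : ℕ), pi m x k = if 1 ≤ k ∧ k ≤ d m then x k else 0
  /-- the embeddings `i_{m,n}` -/
  iMap : ℕ → ℕ → (linf →L[ℝ] linf)
  hi12 : ∀ x : linf, x ∈ Esub d 1 → iMap 1 2 x = x
  histep : ∀ n : ℕ, 2 ≤ n → ∀ x : linf, x ∈ Esub d n →
    iMap n (n + 1) x = x + ∑ k ∈ Finset.Ioc (d n) (d (n + 1)),
      (a * ((φ k).1 : ℝ) * x (φ k).2.1 +
        b * (((φ k).2.2.2.1 : ℤ) : ℝ) *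
          ((x - iMap (φ k).2.2.1 n (pi (φ k).2.2.1 x)) (φ k).2.2.2.2)) • ek k
  hicomp : ∀ m n : ℕ, 1 ≤ m → m < n → ∀ x : linf, x ∈ Esub d m →
    iMap m (n + 1) x = iMap n (n + 1) (iMap m n x)
  hinorm : ∀ m n : ℕ, 1 ≤ m → m < n → ∀ x : linf, x ∈ Esub d m → ‖iMap m n x‖ ≤ lam * ‖x‖
  /-- the coordinatewise limit projections `P_m` -/
  P : ℕ → (linf →L[ℝ] linf)
  hP0 : P 0 = 0
  hPlim : ∀ m : ℕ, 1 ≤ m → ∀ (x : linf) (k : ℕ),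
    Filter.Tendsto (fun n => (iMap m n (pi m x)) k) Filter.atTop (nhds (P m x k))
  hPproj : ∀ m : ℕ, (P m).comp (P m) = P m
  hPnorm : ∀ m : ℕ, ‖P m‖ ≤ lam

/-- The Bourgain–Delbaen space `X = X_{a,b}`, the closed linear span of `⋃ m, P_m(E_m)`. -/
noncomputable def Xsub (S : BDSetup) : Submodule ℝ linf :=
  (Submodule.span ℝ (⋃ m ∈ {m : ℕ | 1 ≤ m}, (S.P m) '' (Esub S.d m))).topologicalClosure

/-- The restriction (quotient) map `Q : ℓ∞^* → X^*`. -/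
noncomputable def QMap (S : BDSetup) (f : linf →L[ℝ] ℝ) : (Xsub S) →L[ℝ] ℝ :=
  f.comp (Xsub S).subtypeL

/-- The images `Q e_k^*` of the coordinate functionals in `X^*`. -/
noncomputable def Qe (S : BDSetup) (k : ℕ) : (Xsub S) →L[ℝ] ℝ := QMap S (coordFn k)

/-- The Szlenk sets `P_α(ε, B)` of a subset `B` of the dual of `Y`:
`P₀ = B`; `b ∈ P_{α+1}` iff `b ∈ B` and `b` is the weak* limit of a sequence in `P_α` whose
evaluations along some weakly null sequence of the unit ball of `Y` converge to a limit `≥ ε`;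
intersections are taken at limit ordinals. -/
noncomputable def SzlenkSet (Y : Type*) [NormedAddCommGroup Y] [NormedSpace ℝ Y]
    (ε : ℝ) (B : Set (Y →L[ℝ] ℝ)) : Ordinal → Set (Y →L[ℝ] ℝ) :=
  fun α => Ordinal.limitRecOn α B
    (fun _ prev => {b | b ∈ B ∧ ∃ (a : ℕ → Y) (bs : ℕ → Y →L[ℝ] ℝ),
      (∀ n, ‖a n‖ ≤ 1) ∧
      (∀ F : Y →L[ℝ] ℝ, Filter.Tendsto (fun n => F (a n)) Filter.atTop (nhds (0 : ℝ))) ∧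
      (∀ n, bs n ∈ prev) ∧
      (∀ y : Y, Filter.Tendsto (fun n => bs n y) Filter.atTop (nhds (b y))) ∧
      (∃ L : ℝ, ε ≤ L ∧ Filter.Tendsto (fun n => bs n (a n)) Filter.atTop (nhds L))})
    (fun β _ ih => ⋂ (γ : Ordinal) (h : γ < β), ih γ h)

/-!
For `d n < k ≤ d (n + 1)` the construction gives `|P n x k| ≤ a |x i| + b |(x - P m x) j|` with
`m < n` and `i ≤ d m`. Cutting a sum of `N + 1` successive blocks at `m` therefore bounds each of
its coordinates by `a` times a coordinate of the blocks before the cut, plus `b` times a coordinate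
of the blocks after it, plus a constant. Since `a, b < 1`, there is `s < 1` such that
`a x ^ s + b y ^ s ≤ θ (x + y) ^ s` with `θ < 1`, so sums of `N` bounded blocks have norm
`O(N ^ s)`.

On the other hand, weakly null sequences in `X` are small perturbations of sequences of blocks, so
a functional in the `N`-th Szlenk set produces a functional `g` in the ball and `N` successive
blocks on each of which `g` exceeds `ε / 2`. Their sum has norm at least `N ε / 2`, which is
impossible for large `N`.
-/

open scoped Topology

/-! ### Sublinear growth -/

lemma add_rpow_le_two_rpow_mul_add_rpow {s x y : ℝ} (hs : 0 ≤ s) (hs' : s ≤ 1) (hx : 0 ≤ x)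
    (hy : 0 ≤ y) : x ^ s + y ^ s ≤ 2 ^ (1 - s) * (x + y) ^ s := by
  have midpoint : 1 / 2 * x ^ s + 1 / 2 * y ^ s ≤ (1 / 2 * x + 1 / 2 * y) ^ s :=
    (Real.concaveOn_rpow hs hs').2 hx hy (by norm_num) (by norm_num) (by norm_num)
  calc x ^ s + y ^ s ≤ 2 * (1 / 2 * x + 1 / 2 * y) ^ s := by linarith
    _ = 2 * ((x + y) ^ s / 2 ^ s) := by rw [← Real.div_rpow (by positivity) (by norm_num)]; ring_nf
    _ = 2 ^ (1 - s) * (x + y) ^ s := by rw [Real.rpow_sub two_pos, Real.rpow_one]; ring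

lemma exists_mul_rpow_add_mul_rpow_le {a b : ℝ} (ha : a < 1) (hb : b < 1) :
    ∃ s θ : ℝ, 0 ≤ s ∧ s < 1 ∧ 0 ≤ θ ∧ θ < 1 ∧
      ∀ x y : ℝ, 0 ≤ x → 0 ≤ y → a * x ^ s + b * y ^ s ≤ θ * (x + y) ^ s := by
  set c := max (max a b) 0
  have tendsto_c : Tendsto (fun s : ℝ => c * 2 ^ (1 - s)) (𝓝[<] 1) (𝓝 c) := by
    have : ContinuousAt (fun s : ℝ => c * (2 : ℝ) ^ (1 - s)) 1 := by fun_prop (disch := norm_num)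
    simpa using this.tendsto.mono_left nhdsWithin_le_nhds
  have : 0 ≤ c := le_max_right _ _
  have hc : c < 1 := max_lt (max_lt ha hb) one_pos
  obtain ⟨s, hθ, hs, hs'⟩ := ((tendsto_c.eventually_lt_const hc).and
    (Ioo_mem_nhdsLT (zero_lt_one' ℝ))).exists
  refine ⟨s, c * 2 ^ (1 - s), hs.le, hs', by positivity, hθ, fun x y hx hy => ?_⟩
  calc a * x ^ s + b * y ^ s ≤ c * x ^ s + c * y ^ s := by
        gcongr
        exacts [(le_max_left a b).trans (le_max_left _ _),
          (le_max_right a b).trans (le_max_left _ _)]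
    _ = c * (x ^ s + y ^ s) := by ring
    _ ≤ c * (2 ^ (1 - s) * (x + y) ^ s) := by
        gcongr
        exact add_rpow_le_two_rpow_mul_add_rpow hs.le hs'.le hx hy
    _ = c * 2 ^ (1 - s) * (x + y) ^ s := by ring

lemma exists_le_mul_rpow_of_split {ι : Type*} {a b K : ℝ} (ha₀ : 0 ≤ a) (ha : a < 1) (hb₀ : 0 ≤ b)
    (hb : b < 1) (hK : 0 ≤ K) :
    ∃ s C : ℝ, s < 1 ∧ 0 ≤ C ∧ ∀ f : ℕ → ι → ℝ, (∀ i, f 0 i ≤ 0) →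
      (∀ N i, ∃ l m j k, l + m = N ∧ f (N + 1) i ≤ a * f l j + b * f m k + K) →
      ∀ N i, f N i ≤ C * (N : ℝ) ^ s := by
  obtain ⟨s, θ, hs₀, hs, hθ₀, hθ, hsplit⟩ := exists_mul_rpow_add_mul_rpow_le ha hb
  set C := K / (1 - θ)
  have hC : 0 ≤ C := div_nonneg hK (by linarith)
  have hKC : K = (1 - θ) * C := by simp only [C]; field_simp [(by linarith : 1 - θ ≠ 0)]
  refine ⟨s, C, hs, hC, fun f hf₀ hf N => ?_⟩
  induction N using Nat.strong_induction_on with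
  | _ N ih =>
  intro i
  rcases N with _ | N
  · exact (hf₀ i).trans (by positivity)
  obtain ⟨l, m, j, k, rfl, hle⟩ := hf N i
  calc f (l + m + 1) i ≤ a * f l j + b * f m k + K := hle
    _ ≤ a * (C * (l : ℝ) ^ s) + b * (C * (m : ℝ) ^ s) + K := by
        gcongr
        exacts [ih l (by omega) j, ih m (by omega) k]
    _ = C * (a * (l : ℝ) ^ s + b * (m : ℝ) ^ s) + (1 - θ) * C * 1 := by rw [hKC]; ring
    _ ≤ C * (θ * ((l : ℝ) + m) ^ s) + (1 - θ) * C * ((l + m + 1 : ℕ) : ℝ) ^ s := by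
        have : 0 ≤ 1 - θ := by linarith
        gcongr
        · exact hsplit l m l.cast_nonneg m.cast_nonneg
        · exact Real.one_le_rpow (by exact_mod_cast Nat.le_add_left 1 (l + m)) hs₀
    _ ≤ C * (θ * ((l + m + 1 : ℕ) : ℝ) ^ s) + (1 - θ) * C * ((l + m + 1 : ℕ) : ℝ) ^ s := by
        gcongr
        push_cast
        linarith
    _ = C * ((l + m + 1 : ℕ) : ℝ) ^ s := by ring

lemma exists_mul_rpow_lt_mul {s η : ℝ} (C : ℝ) (hs : s < 1) (hη : 0 < η) :
    ∃ N : ℕ, C * (N : ℝ) ^ s < N * η := by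
  have tendsto_zero : Tendsto (fun N : ℕ => C * (N : ℝ) ^ (-(1 - s))) atTop (𝓝 0) := by
    simpa using ((tendsto_rpow_neg_atTop (sub_pos.2 hs)).comp
      tendsto_natCast_atTop_atTop).const_mul C
  obtain ⟨N, hlt, hN⟩ := ((tendsto_zero.eventually_lt_const hη).and (eventually_gt_atTop 0)).exists
  have hN' : (0 : ℝ) < N := Nat.cast_pos.2 hN
  refine ⟨N, ?_⟩
  calc C * (N : ℝ) ^ s = N * (C * (N : ℝ) ^ (-(1 - s))) := by
        rw [neg_sub, Real.rpow_sub_one hN'.ne']; field_simp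
    _ < N * η := by gcongr

/-! ### Szlenk sets -/

section Szlenk

variable {Y : Type*} [NormedAddCommGroup Y] [NormedSpace ℝ Y] {ε : ℝ} {B : Set (Y →L[ℝ] ℝ)}

lemma szlenkSet_zero : SzlenkSet Y ε B 0 = B :=
  Ordinal.limitRecOn_zero _ _ _

lemma mem_szlenkSet_add_one {α : Ordinal} {f : Y →L[ℝ] ℝ} :
    f ∈ SzlenkSet Y ε B (α + 1) ↔ f ∈ B ∧ ∃ (a : ℕ → Y) (g : ℕ → Y →L[ℝ] ℝ),
      (∀ n, ‖a n‖ ≤ 1) ∧ (∀ F : Y →L[ℝ] ℝ, Tendsto (fun n => F (a n)) atTop (𝓝 0)) ∧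
      (∀ n, g n ∈ SzlenkSet Y ε B α) ∧ (∀ y, Tendsto (fun n => g n y) atTop (𝓝 (f y))) ∧
      ∃ L, ε ≤ L ∧ Tendsto (fun n => g n (a n)) atTop (𝓝 L) := by
  unfold SzlenkSet
  rw [Ordinal.limitRecOn_add_one]
  rfl

lemma szlenkSet_natCast_subset (N : ℕ) : SzlenkSet Y ε B N ⊆ B := by
  rcases N with _ | N
  · rw [Nat.cast_zero, szlenkSet_zero]
  · intro f hf
    rw [Nat.cast_succ] at hf
    exact (mem_szlenkSet_add_one.1 hf).1

/-- The family `W p q` of sets of block vectors supported in the interval `(p, q]` captures weakly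
null sequences of the unit ball: up to small perturbations their terms are blocks supported
arbitrarily far out. -/
def CapturesWeaklyNull (W : ℕ → ℕ → Set Y) : Prop :=
  ∀ a : ℕ → Y, (∀ n, ‖a n‖ ≤ 1) → (∀ F : Y →L[ℝ] ℝ, Tendsto (fun n => F (a n)) atTop (𝓝 0)) →
    ∀ p, ∀ δ > 0, ∀ᶠ n in atTop, ∃ q ≥ p, ∃ z ∈ W p q, ‖z - a n‖ ≤ δ

variable {W : ℕ → ℕ → Set Y} {η : ℝ}

theorem exists_blocks_of_mem_szlenkSet (hB : ∀ f ∈ B, ‖f‖ ≤ 1) (hW₀ : ∀ p, 0 ∈ W p p)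
    (hW : CapturesWeaklyNull W) (hη : η < ε) (N : ℕ) :
    ∀ f ∈ SzlenkSet Y ε B N, ∀ (p₀ : ℕ) (U : Set (Y → ℝ)), IsOpen U → ⇑f ∈ U →
      ∃ g ∈ B, ⇑g ∈ U ∧ ∃ (p : ℕ → ℕ) (x : ℕ → Y), p 0 = p₀ ∧ Monotone p ∧
        (∀ i, x i ∈ W (p i) (p (i + 1))) ∧ ∀ i < N, η < g (x i) := by
  induction N with
  | zero =>
    intro f hf p₀ U _ hfU
    exact ⟨f, szlenkSet_natCast_subset 0 hf, hfU, fun _ => p₀, fun _ => 0, rfl, monotone_const,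
      fun _ => hW₀ p₀, by simp⟩
  | succ N ih =>
    intro f hf p₀ U hU hfU
    rw [Nat.cast_succ, mem_szlenkSet_add_one] at hf
    obtain ⟨-, a, g, ha, ha_null, hg, hgf, L, hεL, hL⟩ := hf
    have g_mem : ∀ᶠ n in atTop, ⇑(g n) ∈ U :=
      (tendsto_pi_nhds.2 hgf).eventually_mem (hU.mem_nhds hfU)
    have g_large : ∀ᶠ n in atTop, (η + ε) / 2 < g n (a n) :=
      hL.eventually_const_lt (by linarith)
    obtain ⟨n, hgU, hg_large, q, hq, z, hz, hza⟩ := (g_mem.and (g_large.and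
      (hW a ha ha_null p₀ ((ε - η) / 2) (by linarith)))).exists
    have g_z : η < g n z := by
      have : |g n (z - a n)| ≤ 1 * ‖z - a n‖ :=
        (g n).le_of_opNorm_le (hB _ (szlenkSet_natCast_subset N (hg n))) _
      rw [map_sub] at this
      linarith [(abs_le.1 this).1]
    obtain ⟨h, hhB, ⟨hhU, h_z⟩, p, x, rfl, hp, hx, h_large⟩ :=
      ih (g n) (hg n) q (U ∩ {φ | η < φ z})
        (hU.inter (isOpen_lt continuous_const (continuous_apply z))) ⟨hgU, g_z⟩
    refine ⟨h, hhB, hhU, fun i => Nat.casesOn i p₀ p, fun i => Nat.casesOn i z x, rfl,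
      monotone_nat_of_le_succ ?_, ?_, ?_⟩
    · rintro (_ | i)
      exacts [hq, hp i.le_succ]
    · rintro (_ | i)
      exacts [hz, hx i]
    · rintro (_ | i) hi
      exacts [h_z, h_large i (by omega)]

theorem szlenkSet_natCast_eq_empty (hB : ∀ f ∈ B, ‖f‖ ≤ 1) (hW₀ : ∀ p, 0 ∈ W p p)
    (hW : CapturesWeaklyNull W) (hη : η < ε) {N : ℕ} (p₀ : ℕ)
    (hN : ∀ (p : ℕ → ℕ) (x : ℕ → Y), p 0 = p₀ → Monotone p → (∀ i, x i ∈ W (p i) (p (i + 1))) →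
      ‖∑ i ∈ Finset.range N, x i‖ < N * η) :
    SzlenkSet Y ε B N = ∅ := by
  refine eq_empty_of_forall_notMem fun f hf => ?_
  obtain ⟨g, hgB, -, p, x, hp₀, hp, hx, hgx⟩ :=
    exists_blocks_of_mem_szlenkSet hB hW₀ hW hη N f hf p₀ univ isOpen_univ trivial
  refine (hN p x hp₀ hp hx).not_ge ?_
  calc N * η = ∑ _i ∈ Finset.range N, η := by simp
    _ ≤ ∑ i ∈ Finset.range N, g (x i) :=
        Finset.sum_le_sum fun i hi => (hgx i (Finset.mem_range.1 hi)).le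
    _ = g (∑ i ∈ Finset.range N, x i) := (map_sum g x _).symm
    _ ≤ 1 * ‖∑ i ∈ Finset.range N, x i‖ :=
        (le_abs_self _).trans (g.le_of_opNorm_le (hB g hgB) _)
    _ = ‖∑ i ∈ Finset.range N, x i‖ := one_mul _

end Szlenk

/-! ### Coordinates in `ℓ∞` -/

lemma abs_apply_le_norm (x : linf) (k : ℕ) : |x k| ≤ ‖x‖ :=
  lp.norm_apply_le_norm (E := fun _ : ℕ => ℝ) ENNReal.top_ne_zero x k

lemma sum_smul_ek_apply (s : Finset ℕ) (c : ℕ → ℝ) (j : ℕ) :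
    (∑ k ∈ s, c k • ek k : linf) j = if j ∈ s then c j else 0 := by
  rw [lp.coeFn_sum, Finset.sum_apply]
  simp [ek, Pi.single_apply]

lemma sum_apply_eq_zero {ι : Type*} {x : ι → linf} {s : Finset ι} {k : ℕ}
    (h : ∀ i ∈ s, x i k = 0) : (∑ i ∈ s, x i) k = 0 := by
  rw [lp.coeFn_sum, Finset.sum_apply]
  exact Finset.sum_eq_zero h

lemma sum_Ico_eq_add_add {M : Type*} [AddCommMonoid M] (x : ℕ → M) {u t v : ℕ}
    (ht : t ∈ Finset.Ico u v) :
    ∑ i ∈ Finset.Ico u v, x i =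
      ∑ i ∈ Finset.Ico u t, x i + x t + ∑ i ∈ Finset.Ico (t + 1) v, x i := by
  rw [Finset.mem_Ico] at ht
  rw [← Finset.sum_Ico_consecutive x ht.1 ht.2.le, Finset.sum_eq_sum_Ico_succ_bot ht.2, add_assoc]

lemma ek_mem_Esub {d : ℕ → ℕ} {n k : ℕ} (hk : 1 ≤ k) (hkn : k ≤ d n) : ek k ∈ Esub d n :=
  Submodule.subset_span ⟨k, hk, hkn, rfl⟩

lemma apply_eq_zero_of_mem_Esub {d : ℕ → ℕ} {n k : ℕ} {x : linf} (hx : x ∈ Esub d n)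
    (hk : ¬(1 ≤ k ∧ k ≤ d n)) : x k = 0 := by
  induction hx using Submodule.span_induction with
  | mem y hy =>
    obtain ⟨l, h1, hl, rfl⟩ := hy
    have : k ≠ l := by rintro rfl; exact hk ⟨h1, hl⟩
    simp [ek, this]
  | zero => rfl
  | add y z _ _ hy hz => simp [hy, hz]
  | smul c y _ hy => simp [hy]

lemma exists_cut_of_monotone {p : ℕ → ℕ} (hp : Monotone p) (m : ℕ) {u v : ℕ} (huv : u < v) :
    ∃ t ∈ Finset.Ico u v, (∀ i ∈ Finset.Ico u t, p (i + 1) ≤ m) ∧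
      ∀ i ∈ Finset.Ico (t + 1) v, m < p i := by
  simp only [Finset.mem_Ico]
  induction v, huv using Nat.le_induction with
  | base => exact ⟨u, by omega, by omega, by omega⟩
  | succ v huv ih =>
    obtain ⟨t, ht, hlow, hhigh⟩ := ih
    rcases le_or_gt (p v) m with hv | hv
    · exact ⟨v, by omega, fun i hi => (hp hi.2).trans hv, by omega⟩
    · refine ⟨t, by omega, hlow, fun i hi => ?_⟩
      exact (Nat.lt_succ_iff_lt_or_eq.1 hi.2).elim (fun h => hhigh i ⟨hi.1, h⟩) (fun h => h ▸ hv)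

namespace BDSetup

variable (S : BDSetup) {m n k p q : ℕ}

lemma one_le_d_and_d_lt_d_add_one (hn : 1 ≤ n) : 1 ≤ S.d n ∧ S.d n < S.d (n + 1) := by
  induction n, hn using Nat.le_induction with
  | base => simp [S.hd1, S.hd2]
  | succ n hn ih =>
    have hd : 1 ≤ S.d (n + 1) := by omega
    obtain ⟨k, hk, -⟩ := (S.hφ (n + 1) (by omega)).surjOn (a := (1, 1, 1, 1, 1))
      ⟨.inl rfl, .inl rfl, le_rfl, Nat.lt_add_of_pos_left hn, le_rfl, S.hd1.ge, le_rfl, hd⟩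
    exact ⟨hd, hk.1.trans_le hk.2⟩

lemma d_lt_d_add_one (hn : 1 ≤ n) : S.d n < S.d (n + 1) :=
  (S.one_le_d_and_d_lt_d_add_one hn).2

lemma d_le_d (hm : 1 ≤ m) (hmn : m ≤ n) : S.d m ≤ S.d n :=
  Nat.rel_of_forall_rel_succ_of_le_of_le (· ≤ ·) (fun _ h => (S.d_lt_d_add_one h).le) hm hmn

lemma le_d (hn : 1 ≤ n) : n ≤ S.d n := by
  induction n, hn using Nat.le_induction with
  | base => simp [S.hd1]
  | succ n hn ih => have := S.d_lt_d_add_one hn; omega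

lemma exists_d_lt_le_d_add_one (hk : S.d 2 < k) : ∃ n, 2 ≤ n ∧ S.d n < k ∧ k ≤ S.d (n + 1) := by
  by_contra! h
  have d_lt : S.d (k + 2) < k := Nat.le_induction hk h (k + 2) (by omega)
  have := S.le_d (n := k + 2) (by omega)
  omega

/-! ### The projections `π_m` and the embeddings `i_{m,n}` -/

lemma pi_eq_sum (m : ℕ) (x : linf) : S.pi m x = ∑ k ∈ Finset.Icc 1 (S.d m), x k • ek k := by
  ext k
  rw [S.hpi, sum_smul_ek_apply]
  simp

lemma pi_mem_Esub (m : ℕ) (x : linf) : S.pi m x ∈ Esub S.d m := by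
  rw [pi_eq_sum]
  refine Submodule.sum_mem _ fun k hk => Submodule.smul_mem _ _ ?_
  exact ek_mem_Esub (Finset.mem_Icc.1 hk).1 (Finset.mem_Icc.1 hk).2

variable {S}

lemma pi_eq_pi {x y : linf} (h : ∀ k, 1 ≤ k → k ≤ S.d m → x k = y k) : S.pi m x = S.pi m y := by
  simp only [pi_eq_sum]
  exact Finset.sum_congr rfl fun k hk => by
    rw [h k (Finset.mem_Icc.1 hk).1 (Finset.mem_Icc.1 hk).2]

lemma pi_eq_self {x : linf} (hx : x ∈ Esub S.d m) : S.pi m x = x := by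
  ext k
  rw [S.hpi]
  split_ifs with hk
  exacts [rfl, (apply_eq_zero_of_mem_Esub hx hk).symm]

lemma iMap_add_one_mem {x : linf} (hn : 1 ≤ n) (hx : x ∈ Esub S.d n) :
    S.iMap n (n + 1) x ∈ Esub S.d (n + 1) := by
  have hxn : x ∈ Esub S.d (n + 1) :=
    Submodule.span_mono (by
      rintro _ ⟨k, hk, hkn, rfl⟩
      exact ⟨k, hk, hkn.trans (S.d_lt_d_add_one hn).le, rfl⟩) hx
  rcases hn.eq_or_lt with rfl | hn
  · rwa [S.hi12 x hx]
  · rw [S.histep n hn x hx]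
    refine add_mem hxn (Submodule.sum_mem _ fun k hk => Submodule.smul_mem _ _ ?_)
    rw [Finset.mem_Ioc] at hk
    exact ek_mem_Esub (by omega) hk.2

lemma iMap_add_one_apply {x : linf} (hn : 1 ≤ n) (hx : x ∈ Esub S.d n) (hk : k ≤ S.d n) :
    S.iMap n (n + 1) x k = x k := by
  rcases hn.eq_or_lt with rfl | hn
  · rw [S.hi12 x hx]
  · rw [S.histep n hn x hx, lp.coeFn_add, Pi.add_apply, sum_smul_ek_apply,
      if_neg (by rw [Finset.mem_Ioc]; omega), add_zero]

lemma iMap_mem {x : linf} (hm : 1 ≤ m) (hmn : m < n) (hx : x ∈ Esub S.d m) :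
    S.iMap m n x ∈ Esub S.d n := by
  induction n, hmn using Nat.le_induction with
  | base => exact iMap_add_one_mem hm hx
  | succ n hmn ih =>
    rw [S.hicomp m n hm hmn x hx]
    exact iMap_add_one_mem (by omega) ih

lemma iMap_apply_eq {x : linf} (hm : 1 ≤ m) (hmn : m < n) (hnq : n ≤ q) (hx : x ∈ Esub S.d m)
    (hk : k ≤ S.d n) : S.iMap m q x k = S.iMap m n x k := by
  induction q, hnq using Nat.le_induction with
  | base => rfl
  | succ q hnq ih =>
    rw [S.hicomp m q hm (by omega) x hx, iMap_add_one_apply (by omega)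
      (iMap_mem hm (by omega) hx) (hk.trans (S.d_le_d (by omega) hnq)), ih]

lemma iMap_iMap {x : linf} (hm : 1 ≤ m) (hmn : m < n) (hnq : n < q) (hx : x ∈ Esub S.d m) :
    S.iMap n q (S.iMap m n x) = S.iMap m q x := by
  induction q, hnq using Nat.le_induction with
  | base => exact (S.hicomp m n hm hmn x hx).symm
  | succ q hnq ih =>
    rw [S.hicomp m q hm (by omega) x hx, ← ih,
      S.hicomp n q (by omega) hnq _ (iMap_mem hm hmn hx)]

/-! ### The projections `P_m` -/

lemma P_apply_eq_iMap (hm : 1 ≤ m) (hmn : m < n) (x : linf) (hk : k ≤ S.d n) :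
    S.P m x k = S.iMap m n (S.pi m x) k := by
  refine tendsto_nhds_unique (S.hPlim m hm x k) (tendsto_const_nhds.congr' ?_)
  filter_upwards [eventually_ge_atTop n] with q hq
  exact (iMap_apply_eq hm hmn hq (S.pi_mem_Esub m x) hk).symm

lemma P_apply_of_le (hm : 1 ≤ m) (x : linf) (hk : 1 ≤ k) (hkm : k ≤ S.d m) :
    S.P m x k = x k := by
  rw [P_apply_eq_iMap hm m.lt_add_one x (hkm.trans (S.d_lt_d_add_one hm).le),
    iMap_add_one_apply hm (S.pi_mem_Esub m x) hkm, S.hpi, if_pos ⟨hk, hkm⟩]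

lemma P_apply_zero (m : ℕ) (x : linf) : S.P m x 0 = 0 := by
  rcases m.eq_zero_or_pos with rfl | hm
  · simp [S.hP0]
  · rw [P_apply_eq_iMap hm m.lt_add_one x (Nat.zero_le _)]
    exact apply_eq_zero_of_mem_Esub (iMap_mem hm m.lt_add_one (S.pi_mem_Esub m x)) (by simp)

lemma P_eq_P_of_pi_eq {x y : linf} (h : S.pi m x = S.pi m y) : S.P m x = S.P m y := by
  rcases m.eq_zero_or_pos with rfl | hm
  · simp [S.hP0]
  · ext k
    exact tendsto_nhds_unique (S.hPlim m hm x k) (h ▸ S.hPlim m hm y k)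

lemma P_pi (m : ℕ) (x : linf) : S.P m (S.pi m x) = S.P m x :=
  P_eq_P_of_pi_eq (pi_eq_self (S.pi_mem_Esub m x))

lemma P_P_of_le (hmn : m ≤ n) (x : linf) : S.P m (S.P n x) = S.P m x := by
  rcases m.eq_zero_or_pos with rfl | hm
  · simp [S.hP0]
  · exact P_eq_P_of_pi_eq (pi_eq_pi fun k hk hkm =>
      P_apply_of_le (hm.trans_le hmn) x hk (hkm.trans (S.d_le_d hm hmn)))

lemma P_P_of_ge (hmn : m ≤ n) (x : linf) : S.P n (S.P m x) = S.P m x := by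
  rcases m.eq_zero_or_pos with rfl | hm
  · simp [S.hP0]
  rcases hmn.eq_or_lt with rfl | hmn
  · exact P_P_of_le le_rfl x
  have pi_P : S.pi n (S.P m x) = S.iMap m n (S.pi m x) := by
    rw [← pi_eq_self (iMap_mem hm hmn (S.pi_mem_Esub m x))]
    exact pi_eq_pi fun k _ hk => P_apply_eq_iMap hm hmn x hk
  ext k
  refine tendsto_nhds_unique (S.hPlim n (by omega) _ k) ((S.hPlim m hm x k).congr' ?_)
  filter_upwards [eventually_gt_atTop n] with q hq
  rw [pi_P, iMap_iMap hm hmn hq (S.pi_mem_Esub m x)]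

lemma P_eq_self_of_le {x : linf} (hmn : m ≤ n) (hx : S.P m x = x) : S.P n x = x := by
  rw [← hx, P_P_of_ge hmn]

lemma P_eq_zero_of_le {x : linf} (hmn : m ≤ n) (hx : S.P n x = 0) : S.P m x = 0 := by
  rw [← P_P_of_le hmn, hx, map_zero]

lemma abs_sub_P_apply_le {x : linf} {R : ℝ} (hx : ‖x‖ ≤ R) (m k : ℕ) :
    |(x - S.P m x) k| ≤ (1 + S.lam) * R :=
  calc |(x - S.P m x) k| ≤ ‖x - S.P m x‖ := abs_apply_le_norm _ k
    _ ≤ ‖x‖ + ‖S.P m x‖ := norm_sub_le _ _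
    _ ≤ R + S.lam * R := add_le_add hx ((S.P m).le_of_opNorm_le_of_le (S.hPnorm m) hx)
    _ = (1 + S.lam) * R := by ring

lemma exists_abs_P_apply_le (hn : 2 ≤ n) (hnk : S.d n < k) (hkn : k ≤ S.d (n + 1)) :
    ∃ m i j, 1 ≤ m ∧ i ≤ S.d m ∧
      ∀ x : linf, |S.P n x k| ≤ S.a * |x i| + S.b * |(x - S.P m x) j| := by
  obtain ⟨hσ', hσ'', hm, hmn, hi, him, hj, hjn⟩ := (S.hφ n hn).mapsTo (show k ∈ _ from ⟨hnk, hkn⟩)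
  generalize hφk : S.φ k = φk at *
  obtain ⟨σ', i, m, σ'', j⟩ := φk
  dsimp only at *
  refine ⟨m, i, j, hm, him, fun x => ?_⟩
  have P_formula : S.P n x k = S.a * σ' * x i + S.b * σ'' * (x - S.P m x) j := by
    have hpi := S.pi_mem_Esub n x
    have pi_pi : S.pi m (S.pi n x) = S.pi m x := pi_eq_pi fun l hl hlm => by
      rw [S.hpi, if_pos ⟨hl, hlm.trans (S.d_le_d hm hmn.le)⟩]
    rw [P_apply_eq_iMap (by omega) n.lt_add_one x hkn, S.histep n hn _ hpi, lp.coeFn_add,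
      Pi.add_apply, sum_smul_ek_apply, if_pos (Finset.mem_Ioc.2 ⟨hnk, hkn⟩), hφk,
      apply_eq_zero_of_mem_Esub hpi (by omega), zero_add]
    dsimp only
    rw [pi_pi, lp.coeFn_sub, lp.coeFn_sub, Pi.sub_apply, Pi.sub_apply, S.hpi,
      if_pos ⟨hi, him.trans (S.d_le_d hm hmn.le)⟩, S.hpi, if_pos ⟨hj, hjn⟩,
      P_apply_eq_iMap hm hmn x hjn]
  have abs_sign {σ : ℤ} (h : σ = 1 ∨ σ = -1) : |(σ : ℝ)| = 1 := by rcases h with rfl | rfl <;> simp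
  rw [P_formula]
  refine (abs_add_le _ _).trans_eq ?_
  rw [abs_mul, abs_mul, abs_mul, abs_mul, abs_sign hσ', abs_sign hσ'', abs_of_pos S.hb,
    abs_of_pos (S.hb.trans S.hba), mul_one, mul_one]

/-! ### Block sequences -/

/-- `x` is a block vector on the interval `(p, q]` of the finite-dimensional decomposition given by
`(P_m)`. The case `p = q` is allowed and forces `x = 0`. -/
structure IsBlock (S : BDSetup) (p q : ℕ) (x : linf) : Prop where
  P_left : S.P p x = 0
  P_right : S.P q x = x

lemma isBlock_zero (p q : ℕ) : S.IsBlock p q 0 :=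
  ⟨map_zero _, map_zero _⟩

lemma isBlock_P_sub_P (hpq : p ≤ q) (x : linf) : S.IsBlock p q (S.P q x - S.P p x) where
  P_left := by rw [map_sub, P_P_of_le hpq, P_P_of_le le_rfl, _root_.sub_self]
  P_right := by rw [map_sub, P_P_of_le le_rfl, P_P_of_ge hpq]

lemma IsBlock.apply_eq_zero {x : linf} (hx : S.IsBlock p q x) (hm : 1 ≤ m) (hmp : m ≤ p)
    (hk : k ≤ S.d m) : x k = 0 := by
  rcases k.eq_zero_or_pos with rfl | hk₀
  · rw [← hx.P_right, P_apply_zero]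
  · rw [← P_apply_of_le hm x hk₀ hk, P_eq_zero_of_le hmp hx.P_left]
    rfl

section BlockSequence

variable {p : ℕ → ℕ} {x : ℕ → linf} {R : ℝ} {u v : ℕ}

lemma exists_sum_block_cut (hp : Monotone p) (hx : ∀ i, S.IsBlock (p i) (p (i + 1)) (x i))
    (m : ℕ) (huv : u < v) :
    ∃ t ∈ Finset.Ico u v,
      (∀ k ≤ S.d (m + 1), (∑ i ∈ Finset.Ico (t + 1) v, x i) k = 0) ∧
      (∑ i ∈ Finset.Ico u v, x i) - S.P m (∑ i ∈ Finset.Ico u v, x i) =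
        (x t - S.P m (x t)) + ∑ i ∈ Finset.Ico (t + 1) v, x i := by
  obtain ⟨t, ht, hlow, hhigh⟩ := exists_cut_of_monotone hp m huv
  refine ⟨t, ht, fun k hk => sum_apply_eq_zero fun i hi =>
    (hx i).apply_eq_zero le_add_self (hhigh i hi) hk, ?_⟩
  have head : S.P m (∑ i ∈ Finset.Ico u t, x i) = ∑ i ∈ Finset.Ico u t, x i := by
    rw [map_sum]
    exact Finset.sum_congr rfl fun i hi => P_eq_self_of_le (hlow i hi) (hx i).P_right
  have tail : S.P m (∑ i ∈ Finset.Ico (t + 1) v, x i) = 0 := by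
    rw [map_sum]
    exact Finset.sum_eq_zero fun i hi => P_eq_zero_of_le (hhigh i hi).le (hx i).P_left
  rw [sum_Ico_eq_add_add x ht, map_add, map_add, head, tail]
  abel

lemma abs_sum_block_apply_le_abs_P_apply_add (hp : Monotone p)
    (hx : ∀ i, S.IsBlock (p i) (p (i + 1)) (x i)) (hxR : ∀ i, ‖x i‖ ≤ R) (huv : u < v)
    (hk : k ≤ S.d (n + 1)) :
    |(∑ i ∈ Finset.Ico u v, x i) k| ≤
      |S.P n (∑ i ∈ Finset.Ico u v, x i) k| + (1 + S.lam) * R := by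
  obtain ⟨t, -, tail, sub_P⟩ := exists_sum_block_cut hp hx n huv
  set y := ∑ i ∈ Finset.Ico u v, x i
  calc |y k| = |S.P n y k + (y - S.P n y) k| := by rw [lp.coeFn_sub, Pi.sub_apply]; ring_nf
    _ = |S.P n y k + (x t - S.P n (x t)) k| := by
        rw [sub_P, lp.coeFn_add, Pi.add_apply, tail k hk, add_zero]
    _ ≤ |S.P n y k| + (1 + S.lam) * R :=
        (abs_add_le _ _).trans (by gcongr; exact abs_sub_P_apply_le (hxR t) n k)

lemma exists_abs_sum_block_apply_le (hp : Monotone p) (hp₀ : 2 ≤ p 0)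
    (hx : ∀ i, S.IsBlock (p i) (p (i + 1)) (x i)) (hxR : ∀ i, ‖x i‖ ≤ R) (huv : u < v) (k : ℕ) :
    ∃ t ∈ Finset.Ico u v, ∃ i j, |(∑ l ∈ Finset.Ico u v, x l) k| ≤
      S.a * |(∑ l ∈ Finset.Ico u t, x l) i| + S.b * |(∑ l ∈ Finset.Ico (t + 1) v, x l) j| +
        (S.a * R + S.b * ((1 + S.lam) * R) + (1 + S.lam) * R) := by
  have hb := S.hb
  have ha := hb.trans S.hba
  have hlam := S.hlam
  have hR : 0 ≤ R := (norm_nonneg _).trans (hxR 0)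
  rcases le_or_gt k (S.d 2) with hk | hk
  · refine ⟨u, Finset.left_mem_Ico.2 huv, 0, 0, ?_⟩
    rw [sum_apply_eq_zero fun i _ =>
      (hx i).apply_eq_zero one_le_two (hp₀.trans (hp i.zero_le)) hk, abs_zero]
    positivity
  obtain ⟨n, hn, hnk, hkn⟩ := S.exists_d_lt_le_d_add_one hk
  obtain ⟨m, i, j, hm, him, hP⟩ := S.exists_abs_P_apply_le hn hnk hkn
  obtain ⟨t, ht, tail_t, sub_P_m⟩ := exists_sum_block_cut hp hx m huv
  have sum_i : (∑ l ∈ Finset.Ico u v, x l) i = (∑ l ∈ Finset.Ico u t, x l) i + x t i := by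
    rw [sum_Ico_eq_add_add x ht, lp.coeFn_add, Pi.add_apply,
      tail_t i (him.trans (S.d_lt_d_add_one hm).le), add_zero, lp.coeFn_add, Pi.add_apply]
  have y_k := abs_sum_block_apply_le_abs_P_apply_add hp hx hxR huv hkn
  set y := ∑ l ∈ Finset.Ico u v, x l
  refine ⟨t, ht, i, j, ?_⟩
  have y_i : |y i| ≤ |(∑ l ∈ Finset.Ico u t, x l) i| + R := by
    rw [sum_i]
    exact (abs_add_le _ _).trans (by gcongr; exact (abs_apply_le_norm _ i).trans (hxR t))
  have y_j : |(y - S.P m y) j| ≤ (1 + S.lam) * R + |(∑ l ∈ Finset.Ico (t + 1) v, x l) j| := by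
    rw [sub_P_m, lp.coeFn_add, Pi.add_apply]
    exact (abs_add_le _ _).trans (by gcongr; exact abs_sub_P_apply_le (hxR t) m j)
  calc |y k| ≤ S.a * |y i| + S.b * |(y - S.P m y) j| + (1 + S.lam) * R :=
        y_k.trans (by gcongr; exact hP y)
    _ ≤ S.a * (|(∑ l ∈ Finset.Ico u t, x l) i| + R) +
          S.b * ((1 + S.lam) * R + |(∑ l ∈ Finset.Ico (t + 1) v, x l) j|) +
          (1 + S.lam) * R := by gcongr
    _ = _ := by ring

end BlockSequence

variable (S) in
theorem exists_norm_sum_block_le {R : ℝ} (hR : 0 ≤ R) :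
    ∃ s C : ℝ, s < 1 ∧ ∀ (p : ℕ → ℕ) (x : ℕ → linf), Monotone p → 2 ≤ p 0 →
      (∀ i, S.IsBlock (p i) (p (i + 1)) (x i)) → (∀ i, ‖x i‖ ≤ R) →
      ∀ N : ℕ, ‖∑ i ∈ Finset.range N, x i‖ ≤ C * (N : ℝ) ^ s := by
  have hb := S.hb
  have ha := hb.trans S.hba
  have hlam := S.hlam
  obtain ⟨s, C, hs, hC, hf⟩ := exists_le_mul_rpow_of_split (ι := ℕ × ℕ)
    (K := S.a * R + S.b * ((1 + S.lam) * R) + (1 + S.lam) * R)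
    ha.le S.ha hb.le (S.hba.trans S.ha) (by positivity)
  refine ⟨s, C, hs, fun p x hp hp₀ hx hxR N => ?_⟩
  have coord_le := hf (fun N i => |(∑ l ∈ Finset.Ico i.1 (i.1 + N), x l) i.2|) (by simp)
    fun N ⟨u, k⟩ => by
      obtain ⟨t, ht, i, j, hle⟩ := exists_abs_sum_block_apply_le hp hp₀ hx hxR
        (show u < u + (N + 1) by omega) k
      rw [Finset.mem_Ico] at ht
      refine ⟨t - u, u + N - t, (u, i), (t + 1, j), by omega, ?_⟩
      rwa [show u + (t - u) = t by omega, show t + 1 + (u + N - t) = u + (N + 1) by omega]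
  refine lp.norm_le_of_forall_le (by positivity) fun k => ?_
  simpa using coord_le N (0, k)

/-! ### Approximation in `X` -/

lemma P_mem_Xsub (m : ℕ) (x : linf) : S.P m x ∈ Xsub S := by
  rcases m.eq_zero_or_pos with rfl | hm
  · simp [S.hP0]
  refine Submodule.le_topologicalClosure _ (Submodule.subset_span ?_)
  simp only [mem_iUnion]
  exact ⟨m, hm, S.pi m x, S.pi_mem_Esub m x, P_pi m x⟩

lemma eventually_P_eq_self {x : linf}
    (hx : x ∈ Submodule.span ℝ (⋃ m ∈ {m : ℕ | 1 ≤ m}, S.P m '' Esub S.d m)) :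
    ∀ᶠ n in atTop, S.P n x = x := by
  induction hx using Submodule.span_induction with
  | mem x hx =>
    simp only [mem_iUnion] at hx
    obtain ⟨m, -, v, -, rfl⟩ := hx
    filter_upwards [eventually_ge_atTop m] with n hn using P_P_of_ge hn v
  | zero => simp
  | add x y _ _ hx hy => filter_upwards [hx, hy] with n hx hy using by rw [map_add, hx, hy]
  | smul c x _ hx => filter_upwards [hx] with n hx using by rw [map_smul, hx]

lemma tendsto_P {x : linf} (hx : x ∈ Xsub S) : Tendsto (fun n => S.P n x) atTop (𝓝 x) := by
  have equicontinuous : Equicontinuous fun n => (S.P n : linf → linf) :=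
    ((NormedSpace.equicontinuous_TFAE S.P).out 1 5).2 (⟨S.lam, S.hPnorm⟩ : ∃ C, ∀ i, ‖S.P i‖ ≤ C)
  refine closure_minimal (fun y hy => ?_)
    (equicontinuous.isClosed_setOfPred_tendsto (l := atTop) continuous_id) hx
  exact tendsto_const_nhds.congr' ((eventually_P_eq_self hy).mono fun _ h => h.symm)

lemma tendsto_P_of_tendsto_apply {x : ℕ → linf} (hx : ∀ k, Tendsto (fun n => x n k) atTop (𝓝 0))
    (m : ℕ) : Tendsto (fun n => S.P m (x n)) atTop (𝓝 0) := by
  have tendsto_pi : Tendsto (fun n => S.pi m (x n)) atTop (𝓝 0) := by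
    simp only [pi_eq_sum]
    simpa using tendsto_finsetSum (Finset.Icc 1 (S.d m)) fun k _ => (hx k).smul_const (ek k)
  simpa only [P_pi, map_zero, Function.comp_def] using
    ((S.P m).continuous.tendsto 0).comp tendsto_pi

variable (S) in
theorem capturesWeaklyNull_isBlock {R : ℝ} (hR : 1 < R) :
    CapturesWeaklyNull fun p q => {x : Xsub S | S.IsBlock p q x ∧ ‖x‖ ≤ R} := by
  intro a ha ha_null p δ hδ
  set τ := min δ (R - 1)
  have hτ : 0 < τ := lt_min hδ (sub_pos.2 hR)
  have P_p_small : ∀ᶠ n in atTop, ‖S.P p (a n)‖ < τ / 2 := by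
    have := tendsto_P_of_tendsto_apply (S := S) (x := fun n => (a n : linf))
      (fun k => ha_null (Qe S k)) p
    exact this.norm.eventually_lt_const (by simpa using hτ)
  filter_upwards [P_p_small] with n hn
  obtain ⟨q, hq, hpq⟩ : ∃ q, ‖S.P q (a n) - a n‖ < τ / 2 ∧ p ≤ q :=
    (((tendsto_iff_norm_sub_tendsto_zero.1 (tendsto_P (a n).2)).eventually_lt_const
      (half_pos hτ)).and (eventually_ge_atTop p)).exists
  set z : Xsub S := ⟨S.P q (a n) - S.P p (a n), sub_mem (P_mem_Xsub q _) (P_mem_Xsub p _)⟩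
  have hza : ‖z - a n‖ ≤ τ :=
    calc ‖z - a n‖ = ‖(S.P q (a n) - a n) - S.P p (a n)‖ := by
          rw [Submodule.coe_norm, Submodule.coe_sub, sub_right_comm]
      _ ≤ ‖S.P q (a n) - a n‖ + ‖S.P p (a n)‖ := norm_sub_le _ _
      _ ≤ τ := by linarith
  refine ⟨q, hpq, z, ⟨isBlock_P_sub_P hpq _, ?_⟩, hza.trans (min_le_left _ _)⟩
  calc ‖z‖ ≤ ‖a n‖ + ‖z - a n‖ := norm_le_norm_add_norm_sub' z (a n)
    _ ≤ 1 + (R - 1) := add_le_add (ha n) (hza.trans (min_le_right _ _))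
    _ = R := by ring

end BDSetup

/-- for every `ε > 0` the ε-Szlenk index of the unit ball of `X^*` is
finite. -/
theorem stmt_17 (S : BDSetup) (ε : ℝ) (hε : 0 < ε) :
    ∃ n : ℕ,
      SzlenkSet (Xsub S) ε {f : (Xsub S) →L[ℝ] ℝ | ‖f‖ ≤ 1} (n : Ordinal) = ∅ := by
  obtain ⟨s, C, hs, hsum⟩ := S.exists_norm_sum_block_le zero_le_two
  obtain ⟨N, hN⟩ := exists_mul_rpow_lt_mul C hs (half_pos hε)
  refine ⟨N, szlenkSet_natCast_eq_empty (fun _ hf => hf)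
    (W := fun p q => {x : Xsub S | S.IsBlock p q x ∧ ‖x‖ ≤ 2})
    (fun p => ⟨BDSetup.isBlock_zero p p, by simp⟩) (S.capturesWeaklyNull_isBlock one_lt_two)
    (half_lt_self hε) 2 fun p x hp₀ hp hx => ?_⟩
  calc ‖∑ i ∈ Finset.range N, x i‖ = ‖∑ i ∈ Finset.range N, (x i : linf)‖ := by
        rw [Submodule.coe_norm, Submodule.coe_sum]
    _ ≤ C * (N : ℝ) ^ s :=
        hsum p _ hp hp₀.ge (fun i => (hx i).1) (fun i => (hx i).2) N
    _ < N * (ε / 2) := hN
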